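/- (Poincaré–Borel lemma, ℓ^p version) Fix k ≥ 1 and 1 ≤ p < ∞. For each N ≥ k, let ξ^{(N)} be uniformly distributed on the ball 𝔹_{N,p} and let π^{(k)} denote projection onto the first k coordinates. Then, as N → ∞, π^{(k)}(N^{1/p} ξ^{(N)}) converges in distribution to the law of (p^{1/p} g_1, …, p^{1/p} g_k), where g_1, …, g_k are i.i.d. with density x ↦ exp(-|x|^p)/(2Γ(1+1/p)); equivalently, the limit is the product measure G_p^{⊗k} on ℝ^k, where G_p has density x ↦ exp(-|x|^p/p)/(2 p^{1/p} Γ(1+1/p)). -/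

import Mathlib

/-!
Write `N = k + m`. By Fubini, the slice of the ball over `y ∈ ℝ^k` is an `m`-dimensional ball, so
the first `k` coordinates of the uniform distribution have density proportional to
`(1 - ∑ |y i| ^ p)₊ ^ (m / p)` (`map_proj_restrict_pBall`). After rescaling by `N ^ (1 / p)` this
density becomes proportional to `(1 - ∑ |u i| ^ p / N)₊ ^ (m / p)`, which tends pointwise to
`exp (-∑ |u i| ^ p / p)` (`tendsto_weight`) and is dominated by `exp (-∑ |u i| ^ p / (2 p))` for
`m ≥ k` (`weight_le`). Dominated convergence applies to the numerator and to the denominator of the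
quotient in `integral_uniformBall`. Since both laws are written as normalized densities, no
asymptotics of ball volumes are needed.
-/

open MeasureTheory Filter Set
open scoped ENNReal Topology

noncomputable section

/-- The open unit ball of the `ℓ^p` norm in `ℝ^N`. -/
def pBall (N : ℕ) (p : ℝ) : Set (Fin N → ℝ) := {x | ∑ i, |x i| ^ p < 1}

/-- The uniform (normalized Lebesgue) distribution on the `ℓ^p` ball. -/
def uniformBall (N : ℕ) (p : ℝ) : Measure (Fin N → ℝ) :=
  (volume (pBall N p))⁻¹ • volume.restrict (pBall N p)

/-- Projection onto the first `k` coordinates (junk value `0` if `N < k`). -/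
def proj (k N : ℕ) (x : Fin N → ℝ) : Fin k → ℝ :=
  fun i => if h : (i : ℕ) < N then x ⟨i, h⟩ else 0

/-- The limit law: density `x ↦ exp(-|x|^p/p)/(2 p^{1/p} Γ(1+1/p))`, i.e. the law of
`p^{1/p} g` with `g ∼ G_p`. -/
def GpLimit (p : ℝ) : Measure ℝ :=
  volume.withDensity fun x =>
    ENNReal.ofReal (Real.exp (-|x| ^ p / p) / (2 * p ^ (1 / p) * Real.Gamma (1 + 1 / p)))

/-! ### Measurability and volumes of `ℓ^p` balls -/

/-- The `p`-th power `∑ |x i| ^ p` of the `ℓ^p` norm. -/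
def pSum (p : ℝ) {n : ℕ} (x : Fin n → ℝ) : ℝ := ∑ i, |x i| ^ p

lemma pSum_nonneg (p : ℝ) {n : ℕ} (x : Fin n → ℝ) : 0 ≤ pSum p x :=
  Finset.sum_nonneg fun _ _ => Real.rpow_nonneg (abs_nonneg _) _

lemma measurable_pSum (p : ℝ) (n : ℕ) : Measurable (pSum p : (Fin n → ℝ) → ℝ) := by
  unfold pSum
  fun_prop

lemma measurableSet_pBall (N : ℕ) (p : ℝ) : MeasurableSet (pBall N p) :=
  measurableSet_lt (measurable_pSum p N) measurable_const

lemma measurable_proj (k N : ℕ) : Measurable (proj k N) := by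
  refine measurable_pi_lambda _ fun i => ?_
  by_cases h : (i : ℕ) < N
  · simp only [proj, h, dite_true]
    fun_prop
  · simp only [proj, h, dite_false]
    fun_prop

lemma volume_pBall_pos_lt_top {p : ℝ} (hp : 1 ≤ p) (N : ℕ) :
    0 < volume (pBall N p) ∧ volume (pBall N p) < ⊤ := by
  have hp0 : 0 < p := by linarith
  have h := volume_sum_rpow_lt_one (Fin N) hp
  change volume (pBall N p) = _ at h
  rw [h]
  refine ⟨ENNReal.ofReal_pos.2 ?_, ENNReal.ofReal_lt_top⟩
  have h1 : 0 < Real.Gamma (1 / p + 1) := Real.Gamma_pos_of_pos (by positivity)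
  have h2 : 0 < Real.Gamma ((Fintype.card (Fin N) : ℝ) / p + 1) :=
    Real.Gamma_pos_of_pos (by positivity)
  positivity

/-- Homogeneity of Lebesgue measure; for `t ≤ 0` both sides vanish because `m ≠ 0`. -/
lemma volume_pSum_lt {p : ℝ} (hp : 1 ≤ p) {m : ℕ} (hm : m ≠ 0) (t : ℝ) :
    volume {z : Fin m → ℝ | pSum p z < t} =
      ENNReal.ofReal (max 0 t ^ ((m : ℝ) / p)) * volume (pBall m p) := by
  have hp0 : 0 < p := by linarith
  have : Nonempty (Fin m) := ⟨⟨0, Nat.pos_of_ne_zero hm⟩⟩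
  have h := volume_sum_rpow_lt (Fin m) hp (max 0 t ^ (1 / p))
  rw [← volume_sum_rpow_lt_one (Fin m) hp] at h
  have hs : {z : Fin m → ℝ | pSum p z < t} =
      {z | (∑ i, |z i| ^ p) ^ (1 / p) < max 0 t ^ (1 / p)} := by
    ext z
    have hz := pSum_nonneg p z
    change pSum p z < t ↔ (pSum p z) ^ (1 / p) < _
    rw [Real.rpow_lt_rpow_iff hz (le_max_left _ _) (by positivity), lt_max_iff]
    constructor
    · exact Or.inr
    · rintro (h | h)
      · linarith
      · exact h
  rw [hs, h, Fintype.card_fin, ← ENNReal.ofReal_pow (by positivity), ← Real.rpow_natCast,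
    ← Real.rpow_mul (le_max_left _ _)]
  congr 3
  ring

/-! ### The marginal of the ball -/

/-- Concatenation of vectors, `ℝ^k × ℝ^m ≃ ℝ^(k+m)`. -/
def appendEquiv (k m : ℕ) : (Fin k → ℝ) × (Fin m → ℝ) ≃ᵐ (Fin (k + m) → ℝ) :=
  (MeasurableEquiv.sumPiEquivProdPi (fun _ : Fin k ⊕ Fin m => ℝ)).symm.trans
    (MeasurableEquiv.piCongrLeft (fun _ : Fin (k + m) => ℝ) finSumFinEquiv)

lemma measurePreserving_appendEquiv (k m : ℕ) :
    MeasurePreserving (appendEquiv k m) volume volume :=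
  (volume_measurePreserving_sumPiEquivProdPi_symm (fun _ : Fin k ⊕ Fin m => ℝ)).trans
    (volume_measurePreserving_piCongrLeft (fun _ : Fin (k + m) => ℝ) finSumFinEquiv)

lemma appendEquiv_castAdd (k m : ℕ) (x : (Fin k → ℝ) × (Fin m → ℝ)) (i : Fin k) :
    appendEquiv k m x (Fin.castAdd m i) = x.1 i := by
  have := MeasurableEquiv.piCongrLeft_apply_apply (β := fun _ : Fin (k + m) => ℝ)
    finSumFinEquiv ((MeasurableEquiv.sumPiEquivProdPi (fun _ : Fin k ⊕ Fin m => ℝ)).symm x)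
    (Sum.inl i)
  exact this

lemma appendEquiv_natAdd (k m : ℕ) (x : (Fin k → ℝ) × (Fin m → ℝ)) (i : Fin m) :
    appendEquiv k m x (Fin.natAdd k i) = x.2 i := by
  have := MeasurableEquiv.piCongrLeft_apply_apply (β := fun _ : Fin (k + m) => ℝ)
    finSumFinEquiv ((MeasurableEquiv.sumPiEquivProdPi (fun _ : Fin k ⊕ Fin m => ℝ)).symm x)
    (Sum.inr i)
  exact this

lemma proj_appendEquiv (k m : ℕ) (x : (Fin k → ℝ) × (Fin m → ℝ)) :
    proj k (k + m) (appendEquiv k m x) = x.1 := by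
  ext i
  have h : (i : ℕ) < k + m := by omega
  simp only [proj, h, dite_true]
  exact appendEquiv_castAdd k m x i

lemma pSum_appendEquiv (p : ℝ) (k m : ℕ) (x : (Fin k → ℝ) × (Fin m → ℝ)) :
    pSum p (appendEquiv k m x) = pSum p x.1 + pSum p x.2 := by
  simp only [pSum, Fin.sum_univ_add, appendEquiv_castAdd, appendEquiv_natAdd]

/-- Marginal of Lebesgue measure on the ball: the slice over `y` is an `m`-dimensional ball of
radius `(1 - ∑ |y i| ^ p) ^ (1 / p)`. -/
lemma map_proj_restrict_pBall {p : ℝ} (hp : 1 ≤ p) (k : ℕ) {m : ℕ} (hm : m ≠ 0) :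
    (volume.restrict (pBall (k + m) p)).map (proj k (k + m)) =
      (volume : Measure (Fin k → ℝ)).withDensity fun y =>
        ENNReal.ofReal (max 0 (1 - pSum p y) ^ ((m : ℝ) / p)) * volume (pBall m p) := by
  ext s hs
  have hmp := measurable_proj k (k + m)
  have hB := measurableSet_pBall (k + m) p
  rw [Measure.map_apply hmp hs, Measure.restrict_apply (hmp hs),
    ← (measurePreserving_appendEquiv k m).measure_preimage ((hmp hs).inter hB).nullMeasurableSet,
    Measure.volume_eq_prod, Measure.prod_apply
      ((appendEquiv k m).measurable ((hmp hs).inter hB)),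
    withDensity_apply _ hs, ← lintegral_indicator hs]
  refine lintegral_congr fun y => ?_
  by_cases hy : y ∈ s
  · rw [indicator_of_mem hy, ← volume_pSum_lt hp hm]
    congr 1
    ext z
    change proj k (k + m) (appendEquiv k m (y, z)) ∈ s ∧ pSum p (appendEquiv k m (y, z)) < 1 ↔
      pSum p z < 1 - pSum p y
    rw [proj_appendEquiv, pSum_appendEquiv, lt_sub_iff_add_lt']
    exact and_iff_right hy
  · rw [indicator_of_notMem hy]
    convert measure_empty (μ := (volume : Measure (Fin m → ℝ)))
    ext z
    refine iff_of_false (fun h => hy ?_) id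
    have h1 : proj k (k + m) (appendEquiv k m (y, z)) ∈ s := h.1
    rwa [proj_appendEquiv] at h1

/-! ### The rescaled marginal density -/

/-- The unnormalized density of the first `k` coordinates of `N ^ (1 / p) ξ`, for
`N = k + m`. -/
def weight (k m : ℕ) (p : ℝ) (u : Fin k → ℝ) : ℝ :=
  max 0 (1 - pSum p u / ((k + m : ℕ) : ℝ)) ^ ((m : ℝ) / p)

lemma measurable_weight (k m : ℕ) (p : ℝ) : Measurable (weight k m p) := by
  have := measurable_pSum p k
  unfold weight
  fun_prop

/-- The normalizing constant `c` does not depend on the test function, so it need not be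
computed: testing against `1` determines it. -/
lemma exists_integral_uniformBall {p : ℝ} (hp : 1 ≤ p) (k : ℕ) {m : ℕ} (hm : m ≠ 0) :
    ∃ c : ℝ, ∀ f : (Fin k → ℝ) → ℝ, Continuous f →
      ∫ x, f (fun i => ((k + m : ℕ) : ℝ) ^ (1 / p) * proj k (k + m) x i) ∂(uniformBall (k + m) p)
        = c * ∫ u, weight k m p u * f u := by
  have hp0 : 0 < p := by linarith
  set R : ℝ := ((k + m : ℕ) : ℝ) ^ (1 / p) with hR
  have hN : 0 < ((k + m : ℕ) : ℝ) := by exact_mod_cast (by omega : 0 < k + m)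
  have hR0 : 0 < R := Real.rpow_pos_of_pos hN _
  have hRp : R ^ p = ((k + m : ℕ) : ℝ) := by
    rw [hR, ← Real.rpow_mul hN.le, one_div_mul_cancel hp0.ne', Real.rpow_one]
  refine ⟨((volume (pBall (k + m) p))⁻¹).toReal * ((volume (pBall m p)).toReal *
    |(R ^ Module.finrank ℝ (Fin k → ℝ))⁻¹|), fun f hf => ?_⟩
  have hfm : Continuous fun y : Fin k → ℝ => f (fun i => R * y i) := by fun_prop
  have hdm : Measurable fun y : Fin k → ℝ =>
      ENNReal.ofReal (max 0 (1 - pSum p y) ^ ((m : ℝ) / p)) * volume (pBall m p) := by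
    have := measurable_pSum p k
    fun_prop
  have hVm := (volume_pBall_pos_lt_top hp m).2
  rw [uniformBall, integral_smul_measure]
  have h1 := integral_map (μ := volume.restrict (pBall (k + m) p))
    (measurable_proj k (k + m)).aemeasurable
    (hfm.aestronglyMeasurable (μ := _))
  rw [← h1, map_proj_restrict_pBall hp k hm, integral_withDensity_eq_integral_toReal_smul hdm
    (Eventually.of_forall fun y => ENNReal.mul_lt_top ENNReal.ofReal_lt_top hVm)]
  have h2 := Measure.integral_comp_smul (volume : Measure (Fin k → ℝ))
    (fun u => weight k m p u * f u) R
  have h3 : ∀ y : Fin k → ℝ,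
      (ENNReal.ofReal (max 0 (1 - pSum p y) ^ ((m : ℝ) / p)) * volume (pBall m p)).toReal •
        f (fun i => R * y i) =
      (volume (pBall m p)).toReal * (weight k m p (R • y) * f (R • y)) := by
    intro y
    have h4 : pSum p (R • y) / ((k + m : ℕ) : ℝ) = pSum p y := by
      rw [← hRp, div_eq_iff (by positivity), mul_comm]
      simp only [pSum, Finset.mul_sum, Pi.smul_apply, smul_eq_mul, abs_mul, abs_of_pos hR0]
      exact Finset.sum_congr rfl fun i _ => Real.mul_rpow hR0.le (abs_nonneg _)
    rw [weight, h4, ENNReal.toReal_mul, ENNReal.toReal_ofReal (by positivity), smul_eq_mul]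
    change _ * f (R • y) = _
    ring
  simp_rw [h3]
  rw [integral_const_mul, h2, smul_eq_mul, smul_eq_mul]
  ring

lemma integral_uniformBall {p : ℝ} (hp : 1 ≤ p) (k : ℕ) {m : ℕ} (hm : m ≠ 0)
    {f : (Fin k → ℝ) → ℝ} (hf : Continuous f) :
    ∫ x, f (fun i => ((k + m : ℕ) : ℝ) ^ (1 / p) * proj k (k + m) x i) ∂(uniformBall (k + m) p)
      = (∫ u, weight k m p u * f u) / ∫ u, weight k m p u := by
  obtain ⟨c, hc⟩ := exists_integral_uniformBall hp k hm
  obtain ⟨hV, hV'⟩ := volume_pBall_pos_lt_top hp (k + m)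
  have h1 := hc (fun _ => 1) continuous_const
  have hU : uniformBall (k + m) p univ = 1 := by
    rw [uniformBall, Measure.smul_apply, Measure.restrict_apply_univ, smul_eq_mul,
      ENNReal.inv_mul_cancel hV.ne' hV'.ne]
  simp only [integral_const, measureReal_def, hU, mul_one, ENNReal.toReal_one, smul_eq_mul] at h1
  rw [hc f hf, eq_div_iff (right_ne_zero_of_mul (h1 ▸ one_ne_zero)), mul_right_comm, ← h1,
    one_mul]

/-! ### The limit law -/

lemma integral_exp_neg_mul_abs_rpow {p b : ℝ} (hp : 0 < p) (hb : 0 < b) :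
    ∫ x : ℝ, Real.exp (-b * |x| ^ p) = 2 * (b ^ (-1 / p) * Real.Gamma (1 / p + 1)) := by
  rw [integral_comp_abs (f := fun x => Real.exp (-b * x ^ p)), integral_exp_neg_mul_rpow hp hb]

lemma integrable_exp_neg_mul_abs_rpow {p b : ℝ} (hp : 0 < p) (hb : 0 < b) :
    Integrable fun x : ℝ => Real.exp (-b * |x| ^ p) := by
  -- A function with non-zero Bochner integral is integrable.
  by_contra h
  have h1 := integral_undef h
  rw [integral_exp_neg_mul_abs_rpow hp hb] at h1
  have h2 : 0 < Real.Gamma (1 / p + 1) := Real.Gamma_pos_of_pos (by positivity)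
  have h3 : 0 < b ^ (-1 / p) := Real.rpow_pos_of_pos hb _
  have : 0 < 2 * (b ^ (-1 / p) * Real.Gamma (1 / p + 1)) := by positivity
  exact this.ne' h1

lemma exp_neg_mul_pSum (p b : ℝ) {k : ℕ} (y : Fin k → ℝ) :
    Real.exp (-b * pSum p y) = ∏ i, Real.exp (-b * |y i| ^ p) := by
  rw [pSum, Finset.mul_sum, Real.exp_sum]

lemma integrable_exp_neg_mul_pSum {p b : ℝ} (hp : 0 < p) (hb : 0 < b) (k : ℕ) :
    Integrable fun y : Fin k → ℝ => Real.exp (-b * pSum p y) := by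
  simp_rw [exp_neg_mul_pSum]
  exact Integrable.fintype_prod fun _ => integrable_exp_neg_mul_abs_rpow hp hb

lemma pi_withDensity {k : ℕ} {g : ℝ → ℝ} (hg : Integrable g) (hg0 : ∀ x, 0 ≤ g x) :
    (Measure.pi fun _ : Fin k => (volume : Measure ℝ).withDensity fun x => ENNReal.ofReal (g x)) =
      (volume : Measure (Fin k → ℝ)).withDensity fun y => ENNReal.ofReal (∏ i, g (y i)) := by
  refine Measure.pi_eq fun s hs => ?_
  have hint : Integrable (fun y : Fin k → ℝ => ∏ i, g (y i)) :=
    Integrable.fintype_prod fun _ => hg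
  rw [withDensity_apply _ (MeasurableSet.univ_pi hs),
    ← ofReal_integral_eq_lintegral_ofReal hint.restrict
      (Eventually.of_forall fun y => Finset.prod_nonneg fun i _ => hg0 _),
    volume_pi, Measure.restrict_pi_pi,
    integral_fintype_prod_eq_prod (f := fun _ : Fin k => g),
    ENNReal.ofReal_prod_of_nonneg fun i _ => integral_nonneg hg0]
  refine Finset.prod_congr rfl fun i _ => ?_
  rw [withDensity_apply _ (hs i), ofReal_integral_eq_lintegral_ofReal hg.restrict
    (Eventually.of_forall hg0)]

lemma integral_pi_GpLimit {p : ℝ} (hp : 0 < p) (k : ℕ) (f : (Fin k → ℝ) → ℝ) :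
    ∫ y, f y ∂(Measure.pi fun _ : Fin k => GpLimit p) =
      (∫ y : Fin k → ℝ, Real.exp (-(1 / p) * pSum p y) * f y) /
        ∫ y : Fin k → ℝ, Real.exp (-(1 / p) * pSum p y) := by
  set Z : ℝ := 2 * p ^ (1 / p) * Real.Gamma (1 + 1 / p) with hZ
  have hb : 0 < 1 / p := by positivity
  have hZint : ∫ x : ℝ, Real.exp (-(1 / p) * |x| ^ p) = Z := by
    rw [integral_exp_neg_mul_abs_rpow hp hb, hZ, one_div p, neg_div, one_div p, Real.inv_rpow hp.le,
      Real.rpow_neg hp.le, inv_inv, add_comm p⁻¹ 1]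
    ring
  have hZ0 : 0 < Z := by
    have : 0 < Real.Gamma (1 + 1 / p) := Real.Gamma_pos_of_pos (by positivity)
    positivity
  have hG : GpLimit p = (volume : Measure ℝ).withDensity fun x =>
      ENNReal.ofReal (Real.exp (-(1 / p) * |x| ^ p) / Z) := by
    rw [GpLimit]
    congr 1
    ext x
    rw [← hZ, show -|x| ^ p / p = -(1 / p) * |x| ^ p by ring]
  have hm : Measurable fun y : Fin k → ℝ =>
      ENNReal.ofReal (∏ i, Real.exp (-(1 / p) * |y i| ^ p) / Z) := by
    fun_prop
  rw [hG, pi_withDensity ((integrable_exp_neg_mul_abs_rpow hp hb).div_const Z)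
    (fun x => by positivity), integral_withDensity_eq_integral_toReal_smul hm
    (Eventually.of_forall fun y => ENNReal.ofReal_lt_top)]
  have hD : ∫ y : Fin k → ℝ, Real.exp (-(1 / p) * pSum p y) = Z ^ k := by
    simp_rw [exp_neg_mul_pSum]
    rw [integral_fintype_prod_volume_eq_pow fun x : ℝ => Real.exp (-(1 / p) * |x| ^ p), hZint,
      Fintype.card_fin]
  rw [hD, ← integral_div]
  refine integral_congr_ae (Eventually.of_forall fun y => ?_)
  simp only
  rw [ENNReal.toReal_ofReal (Finset.prod_nonneg fun i _ => by positivity),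
    Finset.prod_div_distrib, ← exp_neg_mul_pSum, Finset.prod_const, Finset.card_univ,
    Fintype.card_fin, smul_eq_mul]
  ring

/-! ### Passage to the limit -/

lemma tendsto_weight {p : ℝ} {k : ℕ} (u : Fin k → ℝ) :
    Tendsto (fun m : ℕ => weight k m p u) atTop (𝓝 (Real.exp (-(1 / p) * pSum p u))) := by
  have hN : Tendsto (fun m : ℕ => k + m) atTop atTop := tendsto_atTop_mono
    (fun m => Nat.le_add_left m k) tendsto_id
  have h1 : Tendsto (fun m : ℕ => (1 + -pSum p u / ((k + m : ℕ) : ℝ)) ^ (k + m)) atTop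
      (𝓝 (Real.exp (-pSum p u))) :=
    (Real.tendsto_one_add_div_pow_exp (-pSum p u)).comp hN
  have h2 : Tendsto (fun m : ℕ => 1 + -pSum p u / ((k + m : ℕ) : ℝ)) atTop (𝓝 1) := by
    simpa using ((tendsto_const_div_atTop_nhds_zero_nat (-pSum p u)).comp hN).const_add 1
  have h3 := (h1.rpow_const (p := 1 / p) (Or.inl (Real.exp_pos _).ne')).mul
    (h2.rpow_const (p := -((k : ℝ) / p)) (Or.inl one_ne_zero))
  rw [Real.one_rpow, mul_one, ← Real.exp_mul, neg_mul, mul_comm, ← neg_mul] at h3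
  refine h3.congr' ?_
  filter_upwards [h2.eventually (lt_mem_nhds one_pos)] with m hm
  rw [weight, sub_eq_add_neg, ← neg_div _ (pSum p u), max_eq_right hm.le, ← Real.rpow_natCast,
    ← Real.rpow_mul hm.le, ← Real.rpow_add hm]
  congr 1
  push_cast
  ring

lemma weight_nonneg (k m : ℕ) (p : ℝ) (u : Fin k → ℝ) : 0 ≤ weight k m p u :=
  Real.rpow_nonneg (le_max_left _ _) _

/-- The dominating function: `1 - t ≤ exp (-t)`, and `m / (k + m) ≥ 1 / 2` once
`m ≥ k` and `m ≠ 0`. -/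
lemma weight_le {p : ℝ} (hp : 0 < p) {k m : ℕ} (hm : m ≠ 0) (hkm : k ≤ m) (u : Fin k → ℝ) :
    weight k m p u ≤ Real.exp (-(1 / (2 * p)) * pSum p u) := by
  have hS := pSum_nonneg p u
  have hm0 : (0 : ℝ) < m := by exact_mod_cast Nat.pos_of_ne_zero hm
  have hk : (k : ℝ) ≤ m := by exact_mod_cast hkm
  have hk0 : (0 : ℝ) ≤ k := Nat.cast_nonneg k
  have h1 : max 0 (1 - pSum p u / ((k + m : ℕ) : ℝ)) ≤
      Real.exp (-(pSum p u / ((k + m : ℕ) : ℝ))) :=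
    max_le (Real.exp_pos _).le (Real.one_sub_le_exp_neg _)
  refine (Real.rpow_le_rpow (le_max_left _ _) h1 (by positivity)).trans ?_
  rw [← Real.exp_mul]
  refine Real.exp_le_exp.2 ?_
  push_cast
  have h2 : 1 / 2 ≤ (m : ℝ) / (k + m) := by
    rw [div_le_div_iff₀ two_pos (by positivity)]
    linarith
  have h3 := mul_le_mul_of_nonneg_left h2 (div_nonneg hS hp.le)
  have e1 : -(pSum p u / ((k : ℝ) + m)) * (m / p) = -(pSum p u / p * (m / (k + m))) := by
    field_simp
  have e2 : -(1 / (2 * p)) * pSum p u = -(pSum p u / p * (1 / 2)) := by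
    field_simp
  rw [e1, e2]
  linarith

lemma tendsto_integral_weight {p : ℝ} (hp : 0 < p) {k : ℕ}
    (f : BoundedContinuousFunction (Fin k → ℝ) ℝ) :
    Tendsto (fun m : ℕ => ∫ u, weight k m p u * f u) atTop
      (𝓝 (∫ u, Real.exp (-(1 / p) * pSum p u) * f u)) := by
  refine tendsto_integral_filter_of_dominated_convergence
    (fun u => Real.exp (-(1 / (2 * p)) * pSum p u) * ‖f‖) ?_ ?_
    ((integrable_exp_neg_mul_pSum hp (by positivity) k).mul_const _) ?_
  · exact Eventually.of_forall fun m =>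
      ((measurable_weight k m p).mul f.continuous.measurable).aestronglyMeasurable
  · filter_upwards [eventually_ne_atTop 0, eventually_ge_atTop k] with m hm hkm
    refine Eventually.of_forall fun u => ?_
    rw [norm_mul, Real.norm_of_nonneg (weight_nonneg k m p u)]
    exact mul_le_mul (weight_le hp hm hkm u) (f.norm_coe_le_norm u) (norm_nonneg _)
      (Real.exp_pos _).le
  · exact Eventually.of_forall fun u => (tendsto_weight u).mul_const _

/-- Poincaré–Borel lemma, `ℓ^p` version: the first `k` coordinates of `N^{1/p} ξ^{(N)}`,
with `ξ^{(N)}` uniform on `𝔹_{N,p}`, converge weakly to `G_p`-type product law. -/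
theorem statement14 (k : ℕ) (hk : 1 ≤ k) (p : ℝ) (hp : 1 ≤ p)
    (f : BoundedContinuousFunction (Fin k → ℝ) ℝ) :
    Tendsto
      (fun N : ℕ => ∫ x, f (fun i => (N : ℝ) ^ (1 / p) * proj k N x i) ∂(uniformBall N p))
      atTop (𝓝 (∫ y, f y ∂(Measure.pi fun _ : Fin k => GpLimit p))) := by
  have hp0 : 0 < p := by linarith
  rw [integral_pi_GpLimit hp0]
  have h1 : Tendsto (fun m : ℕ => ∫ u, weight k m p u) atTop
      (𝓝 (∫ u : Fin k → ℝ, Real.exp (-(1 / p) * pSum p u))) := by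
    simpa using tendsto_integral_weight hp0 (BoundedContinuousFunction.const (Fin k → ℝ) (1 : ℝ))
  have hne : ∫ u : Fin k → ℝ, Real.exp (-(1 / p) * pSum p u) ≠ 0 :=
    (integral_exp_pos (integrable_exp_neg_mul_pSum hp0 (by positivity) k)).ne'
  rw [← tendsto_add_atTop_iff_nat k]
  refine ((tendsto_integral_weight hp0 f).div h1 hne).congr' ?_
  filter_upwards [eventually_ne_atTop 0] with m hm
  rw [Pi.div_apply, add_comm m k]
  exact (integral_uniformBall hp k hm f.continuous).symm

end
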